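/- arXiv:2301.03456 — 2 statements merged into one kernel-verified Lean document; each statement's English description precedes it below -/
import Mathlib

section
/- Let d₋₁, d₋₂, d₊₁, d₊₂ be real numbers with 0 < d₋₁ ≤ d₋₂ and 0 < d₊₁ ≤ d₊₂. Define H̄₋ = 1/(d₋₁ + d₋₂)² + 1/d₋₁² and H̄₊ = 1/(d₊₁ + d₊₂)² + 1/d₊₁². Then h̄ := 1/(d₋₁²·H̄₋) + 1/(d₊₁²·H̄₊) ≥ 8/5. -/
/-- For `0 < a ≤ b`, the neighbour term `1 / (a² (1/(a+b)² + 1/a²))` is at least `4/5`. -/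
theorem four_fifths_le_neighbour_term {a b : ℝ} (ha : 0 < a) (hab : a ≤ b) :
    4 / 5 ≤ 1 / (a ^ 2 * (1 / (a + b) ^ 2 + 1 / a ^ 2)) := by
  have hs : 0 < a + b := by linarith
  have key : 1 / (a ^ 2 * (1 / (a + b) ^ 2 + 1 / a ^ 2)) =
      (a + b) ^ 2 / (a ^ 2 + (a + b) ^ 2) := by
    field_simp
  rw [key, div_le_div_iff₀ (by norm_num) (by positivity)]
  nlinarith

/-- Lower bound `h̄ ≥ 8/5` on the complexity quantity of the unimodal
lower-bound construction: for `0 < d₋₁ ≤ d₋₂` and `0 < d₊₁ ≤ d₊₂`, with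
`H̄₋ = 1/(d₋₁+d₋₂)² + 1/d₋₁²` and `H̄₊ = 1/(d₊₁+d₊₂)² + 1/d₊₁²`, one has
`1/(d₋₁²·H̄₋) + 1/(d₊₁²·H̄₊) ≥ 8/5`. -/
theorem hbar_ge_eight_fifths (dm1 dm2 dp1 dp2 : ℝ)
    (hm1 : 0 < dm1) (hm : dm1 ≤ dm2) (hp1 : 0 < dp1) (hp : dp1 ≤ dp2) :
    1 / (dm1 ^ 2 * (1 / (dm1 + dm2) ^ 2 + 1 / dm1 ^ 2))
      + 1 / (dp1 ^ 2 * (1 / (dp1 + dp2) ^ 2 + 1 / dp1 ^ 2)) ≥ 8 / 5 := by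
  linarith [four_fifths_le_neighbour_term hm1 hm, four_fifths_le_neighbour_term hp1 hp]
end

section
/- Let K ≥ 1 and let p : {1, …, K} → ℝ satisfy 1/4 ≤ p_k ≤ 1/2 for all k, p_{k*} = 1/2, and strict unimodality with peak k* (p_1 < p_2 < … < p_{k*} and p_{k*} > p_{k*+1} > … > p_K). Let i ∈ {1, …, K} with i ∉ {k*−1, k*, k*+1}, and define q_k = p_k for k ≠ i and q_i = 1 − p_i. Then q is not unimodal: there is no index m such that q_1 < q_2 < … < q_m and q_m > q_{m+1} > … > q_K. -/
/-- Flipping the mean of an arm `i` outside `{k*−1, k*, k*+1}` destroys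
unimodality: if `p` is strictly unimodal on `{1,…,K}` with peak `k*`, values in
`[1/4, 1/2]` and `p_{k*} = 1/2`, and `q` agrees with `p` except `q_i = 1 − p_i`,
then there is no index `m` making `q` strictly unimodal with peak `m`. -/
theorem flip_far_arm_not_unimodal (K : ℕ) (p : ℕ → ℝ) (kstar : ℕ)
    (hk1 : 1 ≤ kstar) (hkK : kstar ≤ K)
    (hrange : ∀ k, 1 ≤ k → k ≤ K → p k ∈ Set.Icc (1 / 4 : ℝ) (1 / 2))
    (hpeak : p kstar = 1 / 2)
    (hinc : ∀ k, 1 ≤ k → k < kstar → p k < p (k + 1))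
    (hdec : ∀ k, kstar ≤ k → k < K → p (k + 1) < p k)
    (i : ℕ) (hi1 : 1 ≤ i) (hiK : i ≤ K)
    (hfar : i ∉ ({kstar - 1, kstar, kstar + 1} : Set ℕ))
    (q : ℕ → ℝ) (hq : ∀ k, k ≠ i → q k = p k) (hqi : q i = 1 - p i) :
    ¬ ∃ m, 1 ≤ m ∧ m ≤ K ∧
      (∀ k, 1 ≤ k → k < m → q k < q (k + 1)) ∧
      (∀ k, m ≤ k → k < K → q (k + 1) < q k) := by
  rintro ⟨m, -, -, hqinc, hqdec⟩
  simp only [Set.mem_insert_iff, Set.mem_singleton_iff, not_or] at hfar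
  have hqi_ge : 1 / 2 ≤ q i := by
    have := (hrange i hi1 hiK).2
    linarith
  obtain hlt | hgt : i + 2 ≤ kstar ∨ kstar + 2 ≤ i := by omega
  · have hp : p (i + 1) < p (i + 2) := hinc (i + 1) (by omega) (by omega)
    have hp_le := (hrange (i + 2) (by omega) (by omega)).2
    have hq₁ := hq (i + 1) (by omega)
    have hq₂ := hq (i + 2) (by omega)
    have hm : m ≤ i := by
      by_contra! h
      linarith [hqinc i hi1 h]
    have hdrop : q (i + 2) < q (i + 1) := hqdec (i + 1) (by omega) (by omega)
    linarith
  · obtain ⟨j, rfl⟩ : ∃ j, i = j + 2 := ⟨i - 2, by omega⟩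
    have hp : p (j + 1) < p j := hdec j (by omega) (by omega)
    have hp_le := (hrange j (by omega) (by omega)).2
    have hq₁ := hq (j + 1) (by omega)
    have hq₀ := hq j (by omega)
    have hm : j + 1 < m := by
      by_contra! h
      have hdrop : q (j + 2) < q (j + 1) := hqdec (j + 1) h (by omega)
      linarith
    linarith [hqinc j (by omega) (by omega)]
end
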